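/- Let C = (c_{xy}) ∈ Cor(2,2) with rank(C) = 2, and set θ_{xy} = arccos(c_{xy}) ∈ [0,π] for x, y ∈ {1,2}. Then C is an extreme point of Cor(2,2) if and only if C saturates exactly one of the eight cycle inequalities 0 ≤ (Σ_{(x,y) ≠ (x',y')} θ_{xy}) − θ_{x'y'} ≤ 2π (one pair of inequalities for each choice of (x',y') ∈ {1,2}×{1,2}), and saturates at most one of the eight box inequalities 0 ≤ θ_{xy} ≤ π. -/

import Mathlib

open Matrix Real
open scoped RealInnerProductSpace

/-- The set of quantum correlation matrices (Tsirelson): `n × m` real matrices whose entries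
are inner products of unit vectors in `ℝ^{n+m}`. -/
def Cor (n m : ℕ) : Set (Matrix (Fin n) (Fin m) ℝ) :=
  {C | ∃ u : Fin n → EuclideanSpace ℝ (Fin (n + m)),
       ∃ v : Fin m → EuclideanSpace ℝ (Fin (n + m)),
       (∀ x, ‖u x‖ = 1) ∧ (∀ y, ‖v y‖ = 1) ∧
       ∀ x y, C x y = ⟪u x, v y⟫}

/-- The elliptope: PSD matrices with unit diagonal. -/
def Elliptope (k : ℕ) : Set (Matrix (Fin k) (Fin k) ℝ) :=
  {X | X.PosSemidef ∧ ∀ i, X i i = 1}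

/-- `X` is a PSD completion of `C`. -/
def IsPSDCompletion (n m : ℕ) (X : Matrix (Fin (n + m)) (Fin (n + m)) ℝ)
    (C : Matrix (Fin n) (Fin m) ℝ) : Prop :=
  X ∈ Elliptope (n + m) ∧ ∀ x y, X (Fin.castAdd m x) (Fin.natAdd n y) = C x y

/-- `C` is an extreme point of the convex set `S`. -/
def IsExtremePt {E : Type*} [AddCommMonoid E] [Module ℝ E] (S : Set E) (C : E) : Prop :=
  C ∈ S ∧ ∀ C₁ ∈ S, ∀ C₂ ∈ S, ∀ l : ℝ, 0 < l → l < 1 →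
    C = l • C₁ + (1 - l) • C₂ → C₁ = C ∧ C₂ = C

/-!
For unit vectors `a`, `b`, `v` with `⟪a, v⟫ = cos α` and `⟪b, v⟫ = cos β`, the possible values of
`⟪a, b⟫` form the interval `[cos (α + β), cos (α - β)]`, on which the Gram determinant is
nonnegative and at whose ends it vanishes, that is, the three vectors are coplanar. Hence a `2 × m`
matrix is a correlation matrix iff the intervals of its columns have a common point `s`, to be used
as `⟪u 0, u 1⟫`, and for `2 × 2` matrices a cycle inequality is saturated iff the two intervals
meet only in a common endpoint.

If the intervals overlap more than that, every entry other than `± 1` can be perturbed, so an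
extreme `C` has all entries `± 1` and rank one. If they only touch, every realization of `C` is
planar. Apply this to the Hilbert sum of realizations of the ends of a segment through `C`: the
linear relations between its vectors pass to both summands and, together with a column without
entries `± 1`, determine them up to isometry, so the ends equal `C`. Finally, if each column of `C`
has an entry `± 1`, then `C` is an affine function of `s ∈ [-1, 1]`, so an extreme `C` has
`s = ± 1` and rank one. This is why an extreme `C` of rank two saturates at most one box
inequality, and then two saturated cycle inequalities are impossible since they would saturate two
box inequalities.
-/

section ExtremePoints

variable {E : Type*} [AddCommGroup E] [Module ℝ E] {S : Set E} {x d : E}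

lemma isExtremePt_iff_mem_extremePoints : IsExtremePt S x ↔ x ∈ S.extremePoints ℝ := by
  rw [mem_extremePoints, IsExtremePt]
  refine and_congr_right fun _ => forall₄_congr fun x₁ _ x₂ _ => ⟨?_, ?_⟩
  · rintro h ⟨l, r, hl, hr, hlr, rfl⟩
    obtain rfl : r = 1 - l := by linarith
    exact h l hl (by linarith) rfl
  · exact fun h l hl hl1 hx => h ⟨l, 1 - l, hl, by linarith, by ring, hx.symm⟩

lemma eq_zero_of_eventually_add_smul_mem (hx : x ∈ S.extremePoints ℝ)
    (hd : ∀ᶠ t : ℝ in nhds 0, x + t • d ∈ S) : d = 0 := by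
  obtain ⟨ε, hε, hball⟩ := Metric.eventually_nhds_iff.mp hd
  have hplus : x + (ε / 2) • d ∈ S := hball (by simp [abs_of_pos, hε])
  have hminus : x + (-(ε / 2)) • d ∈ S := hball (by simp [abs_of_pos, hε])
  have heq := (mem_extremePoints_iff_left.mp hx).2 _ hplus _ hminus
    ⟨1 / 2, 1 / 2, by norm_num, by norm_num, by norm_num, by module⟩
  simpa [hε.ne'] using heq

end ExtremePoints

section GramDeterminant

/-- The determinant of the Gram matrix of three unit vectors `a`, `b`, `v` with `⟪a, b⟫ = s`,
`⟪a, v⟫ = c` and `⟪b, v⟫ = d`. -/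
def gramDet (s c d : ℝ) : ℝ :=
  !![1, s, c; s, 1, d; c, d, 1].det

lemma gramDet_eq (s c d : ℝ) : gramDet s c d = 1 - s ^ 2 - c ^ 2 - d ^ 2 + 2 * s * c * d := by
  simp only [gramDet, det_fin_three, of_apply, cons_val]
  ring

lemma gramDet_eq_mul_sub_sq (s c d : ℝ) :
    gramDet s c d = (1 - s ^ 2) * (1 - c ^ 2) - (d - s * c) ^ 2 := by
  rw [gramDet_eq]; ring

lemma gramDet_swap (s c d : ℝ) : gramDet s d c = gramDet s c d := by
  simp only [gramDet_eq]; ring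

variable {E : Type*} [NormedAddCommGroup E] [InnerProductSpace ℝ E] {a b v : E} {s c d : ℝ}

lemma inner_sq_le_one (ha : ‖a‖ = 1) (hb : ‖b‖ = 1) : ⟪a, b⟫ ^ 2 ≤ 1 := by
  rw [sq_le_one_iff_abs_le_one]
  simpa [ha, hb] using abs_real_inner_le_norm a b

lemma eq_inner_smul_of_inner_sq_eq_one (ha : ‖a‖ = 1) (hb : ‖b‖ = 1) (hab : ⟪a, b⟫ ^ 2 = 1) :
    b = ⟪a, b⟫ • a := by
  rw [← sub_eq_zero, ← inner_self_eq_zero (𝕜 := ℝ)]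
  simp only [inner_sub_left, inner_sub_right, real_inner_smul_left, real_inner_smul_right,
    real_inner_comm a b, inner_self_eq_one_of_norm_eq_one, ha, hb]
  linarith

lemma gramDet_inner_nonneg (ha : ‖a‖ = 1) (hb : ‖b‖ = 1) (hv : ‖v‖ = 1) :
    0 ≤ gramDet ⟪a, b⟫ ⟪a, v⟫ ⟪b, v⟫ := by
  have hgram : !![1, ⟪a, b⟫, ⟪a, v⟫; ⟪a, b⟫, 1, ⟪b, v⟫; ⟪a, v⟫, ⟪b, v⟫, 1] =
      gram ℝ ![a, b, v] := by
    ext i j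
    fin_cases i <;> fin_cases j <;> simp [gram_apply, ha, hb, hv, real_inner_comm]
  rw [gramDet, hgram]
  exact (posSemidef_gram ℝ ![a, b, v]).det_nonneg

lemma one_sub_sq_smul_eq_of_gramDet_eq_zero (ha : ‖a‖ = 1) (hb : ‖b‖ = 1) (hv : ‖v‖ = 1)
    (hab : ⟪a, b⟫ = s) (hav : ⟪a, v⟫ = c) (hbv : ⟪b, v⟫ = d) (h : gramDet s c d = 0) :
    (1 - s ^ 2) • v = (c - s * d) • a + (d - s * c) • b := by
  rw [← sub_eq_zero, ← inner_self_eq_zero (𝕜 := ℝ)]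
  simp only [inner_sub_left, inner_sub_right, inner_add_left, inner_add_right,
    real_inner_smul_left, real_inner_smul_right, real_inner_comm a b, real_inner_comm a v,
    real_inner_comm b v, hab, hav, hbv, inner_self_eq_one_of_norm_eq_one, ha, hb, hv]
  rw [gramDet_eq] at h
  linear_combination (1 - s ^ 2) * h

lemma inner_eq_of_one_sub_sq_smul_eq (ha : ‖a‖ = 1) (hb : ‖b‖ = 1) (hv : ‖v‖ = 1)
    (h : (1 - s ^ 2) • v = (c - s * d) • a + (d - s * c) • b) (hdet : gramDet s c d = 0)
    (hs : s ^ 2 ≠ 1) (hc : c ^ 2 ≠ 1) (hd : d ^ 2 ≠ 1) : ⟪a, b⟫ = s := by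
  have hnorm : ⟪(1 - s ^ 2) • v, (1 - s ^ 2) • v⟫ =
      ⟪(c - s * d) • a + (d - s * c) • b, (c - s * d) • a + (d - s * c) • b⟫ := by rw [h]
  simp only [inner_add_left, inner_add_right, real_inner_smul_left, real_inner_smul_right,
    real_inner_comm a b, inner_self_eq_one_of_norm_eq_one, ha, hb, hv] at hnorm
  have hcd : (d - s * c) ^ 2 = (1 - s ^ 2) * (1 - c ^ 2) := by
    linarith [gramDet_eq_mul_sub_sq s c d]
  have hdc : (c - s * d) ^ 2 = (1 - s ^ 2) * (1 - d ^ 2) := by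
    linarith [gramDet_eq_mul_sub_sq s d c, gramDet_swap s c d]
  have hs' : 1 - s ^ 2 ≠ 0 := sub_ne_zero.mpr hs.symm
  have hc' : c - s * d ≠ 0 := sq_eq_zero_iff.not.mp <|
    hdc ▸ mul_ne_zero hs' (sub_ne_zero.mpr hd.symm)
  have hd' : d - s * c ≠ 0 := sq_eq_zero_iff.not.mp <|
    hcd ▸ mul_ne_zero hs' (sub_ne_zero.mpr hc.symm)
  refine mul_left_cancel₀ (mul_ne_zero (mul_ne_zero two_ne_zero hc') hd') ?_
  rw [gramDet_eq] at hdet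
  linear_combination -hnorm + (1 - s ^ 2) * hdet

lemma inner_left_eq_of_one_sub_sq_smul_eq (ha : ‖a‖ = 1) (hab : ⟪a, b⟫ = s)
    (h : (1 - s ^ 2) • v = (c - s * d) • a + (d - s * c) • b) (hs : s ^ 2 ≠ 1) : ⟪a, v⟫ = c := by
  have hinner : ⟪a, (1 - s ^ 2) • v⟫ = ⟪a, (c - s * d) • a + (d - s * c) • b⟫ := by rw [h]
  simp only [inner_add_right, real_inner_smul_right, inner_self_eq_one_of_norm_eq_one ha,
    hab] at hinner
  refine mul_left_cancel₀ (sub_ne_zero.mpr hs.symm) ?_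
  linear_combination hinner

lemma exists_norm_eq_one_inner_eq_inner {ι : Type*} [Fintype ι] (w : ι → E)
    (hι : Fintype.card ι < Module.finrank ℝ E) {p : E} (hp : p ∈ Submodule.span ℝ (Set.range w))
    (hp1 : ‖p‖ ≤ 1) : ∃ u : E, ‖u‖ = 1 ∧ ∀ i, ⟪w i, u⟫ = ⟪w i, p⟫ := by
  have : FiniteDimensional ℝ (Submodule.span ℝ (Set.range w)) :=
    .span_of_finite ℝ (Set.finite_range w)
  have hspan : Submodule.span ℝ (Set.range w) ≠ ⊤ := fun htop => by
    have := finrank_range_le_card (R := ℝ) w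
    rw [Set.finrank, htop, finrank_top] at this
    omega
  obtain ⟨e₀, he₀, hne⟩ := Submodule.exists_mem_ne_zero_of_ne_bot
    (Submodule.orthogonal_eq_bot_iff.not.mpr hspan)
  obtain ⟨e, he, he1⟩ : ∃ e ∈ (Submodule.span ℝ (Set.range w))ᗮ, ‖e‖ = 1 :=
    ⟨‖e₀‖⁻¹ • e₀, Submodule.smul_mem _ _ he₀, norm_smul_inv_norm hne⟩
  have hwe (i : ι) : ⟪w i, e⟫ = 0 := he _ (Submodule.subset_span ⟨i, rfl⟩)
  refine ⟨p + √(1 - ‖p‖ ^ 2) • e, ?_, fun i => by simp [inner_add_right, inner_smul_right, hwe]⟩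
  have hsq : √(1 - ‖p‖ ^ 2) ^ 2 = 1 - ‖p‖ ^ 2 := sq_sqrt (by nlinarith [norm_nonneg p])
  rw [← pow_eq_one_iff_of_nonneg (norm_nonneg _) two_ne_zero, norm_add_sq_real,
    real_inner_smul_right, he p hp, norm_smul, he1, mul_one, norm_eq_abs, sq_abs, hsq]
  ring

lemma exists_norm_eq_one_inner_eq (hE : 2 ≤ Module.finrank ℝ E) (hs : s ^ 2 ≤ 1) :
    ∃ a b : E, ‖a‖ = 1 ∧ ‖b‖ = 1 ∧ ⟪a, b⟫ = s := by
  have : Nontrivial E := Module.nontrivial_of_finrank_pos (R := ℝ) (by omega)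
  obtain ⟨a, ha⟩ := exists_norm_eq E zero_le_one
  obtain ⟨b, hb, hab⟩ := exists_norm_eq_one_inner_eq_inner ![a] (p := s • a)
    (by simpa using by omega) (Submodule.smul_mem _ _ (Submodule.subset_span ⟨0, rfl⟩))
    (by rwa [norm_smul, ha, mul_one, norm_eq_abs, ← sq_le_one_iff_abs_le_one])
  exact ⟨a, b, ha, hb, by simpa [inner_smul_right, ha] using hab 0⟩

lemma exists_mul_one_sub_sq_eq_of_gramDet_nonneg (hs : s ^ 2 ≤ 1) (hc : c ^ 2 ≤ 1)
    (h : 0 ≤ gramDet s c d) :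
    ∃ r : ℝ, r * (1 - s ^ 2) = d - s * c ∧ c ^ 2 + r ^ 2 * (1 - s ^ 2) ≤ 1 := by
  have hsc : (d - s * c) ^ 2 ≤ (1 - s ^ 2) * (1 - c ^ 2) := by
    linarith [gramDet_eq_mul_sub_sq s c d]
  obtain h0 | hpos := (sub_nonneg.mpr hs).eq_or_lt
  · refine ⟨0, ?_, by simpa using hc⟩
    rw [← h0, zero_mul, sq_nonpos_iff] at hsc
    rw [zero_mul, hsc]
  · obtain ⟨r, hr⟩ : ∃ r : ℝ, r * (1 - s ^ 2) = d - s * c :=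
      ⟨(d - s * c) / (1 - s ^ 2), div_mul_cancel₀ _ hpos.ne'⟩
    refine ⟨r, hr, ?_⟩
    rw [← hr] at hsc
    have hr_sq : r ^ 2 * (1 - s ^ 2) ≤ 1 - c ^ 2 := le_of_mul_le_mul_left (by linarith) hpos
    linarith

lemma exists_norm_eq_one_inner_eq_of_gramDet_nonneg (hE : 3 ≤ Module.finrank ℝ E) (ha : ‖a‖ = 1)
    (hb : ‖b‖ = 1) (hc : c ^ 2 ≤ 1) (h : 0 ≤ gramDet ⟪a, b⟫ c d) :
    ∃ v : E, ‖v‖ = 1 ∧ ⟪a, v⟫ = c ∧ ⟪b, v⟫ = d := by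
  obtain ⟨r, hr, hr_le⟩ :=
    exists_mul_one_sub_sq_eq_of_gramDet_nonneg (inner_sq_le_one ha hb) hc h
  set s := ⟪a, b⟫ with hs
  set w := b - s • a with hw
  have haw : ⟪a, w⟫ = 0 := by simp [hw, inner_sub_right, inner_smul_right, ha, ← hs]
  have hbw : ⟪b, w⟫ = 1 - s ^ 2 := by
    rw [hw, inner_sub_right, real_inner_smul_right, real_inner_comm a b, ← hs,
      inner_self_eq_one_of_norm_eq_one hb]
    ring
  have hww : ‖w‖ ^ 2 = 1 - s ^ 2 := by
    rw [← real_inner_self_eq_norm_sq]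
    nth_rw 1 [hw]
    rw [inner_sub_left, real_inner_smul_left, haw, hbw, mul_zero, sub_zero]
  have hp : ‖c • a + r • w‖ ^ 2 ≤ 1 := by
    rw [norm_add_sq_real, real_inner_smul_left, real_inner_smul_right, haw, norm_smul, norm_smul,
      mul_pow, mul_pow, hww, ha, norm_eq_abs, norm_eq_abs, sq_abs, sq_abs]
    linarith
  have hmem : c • a + r • w ∈ Submodule.span ℝ (Set.range ![a, b]) := by
    simp only [Matrix.range_cons, Matrix.range_empty, Set.union_empty, Set.singleton_union,
      Submodule.mem_span_pair]
    exact ⟨c - r * s, r, by rw [hw]; module⟩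
  obtain ⟨v, hv, hinner⟩ := exists_norm_eq_one_inner_eq_inner ![a, b] (by simpa using by omega) hmem
    ((sq_le_one_iff₀ (norm_nonneg _)).mp hp)
  refine ⟨v, hv, (hinner 0).trans ?_, (hinner 1).trans ?_⟩
  · simp [inner_add_right, inner_smul_right, ha, haw]
  · simp only [cons_val_one, cons_val_fin_one, inner_add_right, inner_smul_right,
      real_inner_comm a b, ← hs, hbw]
    linear_combination hr

end GramDeterminant

section InnerRange

/-- The least inner product of two unit vectors whose inner products with a third unit vector are
`c, d ∈ [-1, 1]`. -/
noncomputable def innerMin (c d : ℝ) : ℝ :=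
  cos (arccos c + arccos d)

/-- The greatest inner product of two unit vectors whose inner products with a third unit vector
are `c, d ∈ [-1, 1]`. -/
noncomputable def innerMax (c d : ℝ) : ℝ :=
  cos (arccos c - arccos d)

variable {s c d : ℝ}

lemma innerMin_le_innerMax (c d : ℝ) : innerMin c d ≤ innerMax c d := by
  rw [innerMin, innerMax, cos_add, cos_sub, sin_arccos, sin_arccos]
  linarith [mul_nonneg (sqrt_nonneg (1 - c ^ 2)) (sqrt_nonneg (1 - d ^ 2))]

lemma continuous_innerMin : Continuous fun p : ℝ × ℝ => innerMin p.1 p.2 := by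
  unfold innerMin
  fun_prop

lemma continuous_innerMax : Continuous fun p : ℝ × ℝ => innerMax p.1 p.2 := by
  unfold innerMax
  fun_prop

lemma cos_arccos_of_sq_le_one (hc : c ^ 2 ≤ 1) : cos (arccos c) = c :=
  have habs := abs_le.mp ((sq_le_one_iff_abs_le_one c).mp hc)
  cos_arccos habs.1 habs.2

lemma gramDet_eq_sub_innerMin_mul (s : ℝ) (hc : c ^ 2 ≤ 1) (hd : d ^ 2 ≤ 1) :
    gramDet s c d = (s - innerMin c d) * (innerMax c d - s) := by
  have hsin_c : √(1 - c ^ 2) ^ 2 = 1 - c ^ 2 := sq_sqrt (by linarith)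
  have hsin_d : √(1 - d ^ 2) ^ 2 = 1 - d ^ 2 := sq_sqrt (by linarith)
  rw [gramDet_eq, innerMin, innerMax, cos_add, cos_sub, sin_arccos, sin_arccos,
    cos_arccos_of_sq_le_one hc, cos_arccos_of_sq_le_one hd]
  linear_combination -√(1 - d ^ 2) ^ 2 * hsin_c - (1 - c ^ 2) * hsin_d

lemma gramDet_nonneg_iff (hc : c ^ 2 ≤ 1) (hd : d ^ 2 ≤ 1) :
    0 ≤ gramDet s c d ↔ innerMin c d ≤ s ∧ s ≤ innerMax c d := by
  rw [gramDet_eq_sub_innerMin_mul s hc hd, mul_nonneg_iff]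
  grind [innerMin_le_innerMax]

end InnerRange

section VectorRealization

/-- Families of unit vectors `u` and `v` in an inner product space with `C x y = ⟪u x, v y⟫`. The
space is arbitrary, so that sums of realizations in `E` and `F` may live in `E × F`. -/
structure IsVectorRealization {ι κ E : Type*} [NormedAddCommGroup E] [InnerProductSpace ℝ E]
    (C : Matrix ι κ ℝ) (u : ι → E) (v : κ → E) : Prop where
  norm_left (x : ι) : ‖u x‖ = 1
  norm_right (y : κ) : ‖v y‖ = 1
  apply_eq (x : ι) (y : κ) : C x y = ⟪u x, v y⟫

variable {ι κ E F : Type*} [NormedAddCommGroup E] [InnerProductSpace ℝ E]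
  [NormedAddCommGroup F] [InnerProductSpace ℝ F]

lemma mem_Cor_iff {n m : ℕ} {C : Matrix (Fin n) (Fin m) ℝ} :
    C ∈ Cor n m ↔ ∃ u v : _ → EuclideanSpace ℝ (Fin (n + m)), IsVectorRealization C u v :=
  ⟨fun ⟨u, v, hu, hv, h⟩ => ⟨u, v, hu, hv, h⟩, fun ⟨u, v, h⟩ => ⟨u, v, h.1, h.2, h.3⟩⟩

/-- The embedding of `E × F` into the Hilbert sum for which the inner product is the convex
combination, with weights `l` and `1 - l`, of the inner products of `E` and `F`. -/
noncomputable def weightedSum (l : ℝ) : E × F →ₗ[ℝ] WithLp 2 (E × F) :=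
  (WithLp.linearEquiv 2 ℝ (E × F)).symm.toLinearMap ∘ₗ
    (√l • LinearMap.id).prodMap (√(1 - l) • LinearMap.id)

variable {l : ℝ}

lemma inner_weightedSum (hl : 0 ≤ l) (hl1 : l ≤ 1) (p q : E × F) :
    ⟪weightedSum l p, weightedSum l q⟫ = l * ⟪p.1, q.1⟫ + (1 - l) * ⟪p.2, q.2⟫ := by
  simp [weightedSum, real_inner_smul_left, real_inner_smul_right, ← mul_assoc, hl, hl1]

lemma fst_eq_of_weightedSum_eq (hl : 0 < l) {p q : E × F}
    (h : weightedSum l p = weightedSum l q) : p.1 = q.1 := by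
  have hfst := congrArg WithLp.fst h
  simpa [weightedSum, (sqrt_pos.mpr hl).ne'] using hfst

namespace IsVectorRealization

variable {C : Matrix ι κ ℝ} {u : ι → E} {v : κ → E}

lemma sq_le_one (h : IsVectorRealization C u v) (x : ι) (y : κ) : C x y ^ 2 ≤ 1 :=
  h.apply_eq x y ▸ inner_sq_le_one (h.norm_left x) (h.norm_right y)

lemma convexCombination {C₁ C₂ : Matrix ι κ ℝ} {u' : ι → F} {v' : κ → F}
    (h₁ : IsVectorRealization C₁ u v) (h₂ : IsVectorRealization C₂ u' v') (hl : 0 ≤ l)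
    (hl1 : l ≤ 1) :
    IsVectorRealization (l • C₁ + (1 - l) • C₂) (fun x => weightedSum l (u x, u' x))
      (fun y => weightedSum l (v y, v' y)) := by
  have hnorm {a : E} {b : F} (ha : ‖a‖ = 1) (hb : ‖b‖ = 1) : ‖weightedSum l (a, b)‖ = 1 := by
    rw [← pow_eq_one_iff_of_nonneg (norm_nonneg _) two_ne_zero, ← real_inner_self_eq_norm_sq,
      inner_weightedSum hl hl1, inner_self_eq_one_of_norm_eq_one ha,
      inner_self_eq_one_of_norm_eq_one hb]
    ring
  refine ⟨fun x => hnorm (h₁.norm_left x) (h₂.norm_left x),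
    fun y => hnorm (h₁.norm_right y) (h₂.norm_right y), fun x y => ?_⟩
  simp [inner_weightedSum hl hl1, h₁.apply_eq, h₂.apply_eq]

lemma gramDet_nonneg {C : Matrix (Fin 2) κ ℝ} {u : Fin 2 → E} (h : IsVectorRealization C u v)
    (y : κ) : 0 ≤ gramDet ⟪u 0, u 1⟫ (C 0 y) (C 1 y) := by
  rw [h.apply_eq, h.apply_eq]
  exact gramDet_inner_nonneg (h.norm_left 0) (h.norm_left 1) (h.norm_right y)

lemma apply_eq_mul_inner {x : ι} {y : κ} (h : IsVectorRealization C u v) (hx : C x y ^ 2 = 1)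
    (x' : ι) : C x' y = C x y * ⟪u x', u x⟫ := by
  have hv := eq_inner_smul_of_inner_sq_eq_one (h.norm_left x) (h.norm_right y)
    (h.apply_eq x y ▸ hx)
  rw [h.apply_eq x' y, hv, real_inner_smul_right, ← h.apply_eq]

lemma inner_sq_eq_one_of_column {x x' : ι} {y : κ} (h : IsVectorRealization C u v)
    (hx : C x y ^ 2 = 1) (hx' : C x' y ^ 2 = 1) : ⟪u x, u x'⟫ ^ 2 = 1 := by
  rwa [h.apply_eq_mul_inner hx', mul_pow, hx', one_mul] at hx

lemma det_eq_zero_of_inner_sq_eq_one {n : Type*} [Fintype n] [DecidableEq n] {C : Matrix n n ℝ}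
    {u v : n → E} {i j : n} (h : IsVectorRealization C u v) (hij : i ≠ j)
    (hu : ⟪u i, u j⟫ ^ 2 = 1) : C.det = 0 := by
  have huj := eq_inner_smul_of_inner_sq_eq_one (h.norm_left i) (h.norm_left j) hu
  have hrow (y : n) : C j y = ⟪u i, u j⟫ * C i y := by
    rw [h.apply_eq, huj, real_inner_smul_left, ← h.apply_eq, ← huj]
  rw [← det_updateRow_add_smul_self C hij.symm (-⟪u i, u j⟫)]
  exact det_eq_zero_of_row_eq_zero j fun y => by simp [hrow]

end IsVectorRealization

end VectorRealization

section TwoRows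

variable {m : ℕ} {C : Matrix (Fin 2) (Fin m) ℝ}

lemma sq_le_one_of_mem_Cor {n : ℕ} {C : Matrix (Fin n) (Fin m) ℝ} (hC : C ∈ Cor n m) (x : Fin n)
    (y : Fin m) : C x y ^ 2 ≤ 1 := by
  obtain ⟨u, v, h⟩ := mem_Cor_iff.mp hC
  exact h.sq_le_one x y

lemma mem_Cor_of_gramDet_nonneg {s : ℝ} (hs : s ^ 2 ≤ 1) (hC : ∀ y, C 0 y ^ 2 ≤ 1)
    (h : ∀ y, 0 ≤ gramDet s (C 0 y) (C 1 y)) : C ∈ Cor 2 m := by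
  obtain ⟨a, b, ha, hb, rfl⟩ :=
    exists_norm_eq_one_inner_eq (E := EuclideanSpace ℝ (Fin (2 + m))) (by simp) hs
  have hcol (y : Fin m) := exists_norm_eq_one_inner_eq_of_gramDet_nonneg
    (by have := y.pos; rw [finrank_euclideanSpace_fin]; omega) ha hb (hC y) (h y)
  choose v hv hav hbv using hcol
  exact ⟨![a, b], v, Fin.forall_fin_two.mpr ⟨ha, hb⟩, hv,
    Fin.forall_fin_two.mpr ⟨fun y => (hav y).symm, fun y => (hbv y).symm⟩⟩

theorem mem_Cor_two_iff : C ∈ Cor 2 m ↔ (∀ x y, C x y ^ 2 ≤ 1) ∧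
    ∀ y z, innerMin (C 0 y) (C 1 y) ≤ innerMax (C 0 z) (C 1 z) := by
  refine ⟨fun hC => ?_, fun ⟨hsq, hle⟩ => ?_⟩
  · have hsq := sq_le_one_of_mem_Cor hC
    obtain ⟨u, v, h⟩ := mem_Cor_iff.mp hC
    have hmem (y : Fin m) := (gramDet_nonneg_iff (hsq 0 y) (hsq 1 y)).mp (h.gramDet_nonneg y)
    exact ⟨hsq, fun y z => (hmem y).1.trans (hmem z).2⟩
  · obtain ⟨s, hs, hmem⟩ : ∃ s : ℝ, s ^ 2 ≤ 1 ∧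
        ∀ y, innerMin (C 0 y) (C 1 y) ≤ s ∧ s ≤ innerMax (C 0 y) (C 1 y) := by
      obtain _ | _ := isEmpty_or_nonempty (Fin m)
      · exact ⟨0, by norm_num, isEmptyElim⟩
      · obtain ⟨y₀, hy₀⟩ := Finite.exists_max fun y => innerMin (C 0 y) (C 1 y)
        exact ⟨_, cos_sq_le_one _, fun y => ⟨hy₀ y, hle y₀ y⟩⟩
    exact mem_Cor_of_gramDet_nonneg hs (hsq 0) fun y =>
      (gramDet_nonneg_iff (hsq 0 y) (hsq 1 y)).mpr (hmem y)

lemma sq_eq_one_of_mem_extremePoints_of_innerMin_lt (hC : C ∈ (Cor 2 m).extremePoints ℝ)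
    (hlt : ∀ y z, y ≠ z → innerMin (C 0 y) (C 1 y) < innerMax (C 0 z) (C 1 z)) (x : Fin 2)
    (y : Fin m) : C x y ^ 2 = 1 := by
  by_contra hne
  have hsq := sq_le_one_of_mem_Cor hC.1
  let g (t : ℝ) : Matrix (Fin 2) (Fin m) ℝ := C + t • Matrix.single x y 1
  have hg0 : g 0 = C := by simp [g]
  have hg : Continuous g := by fun_prop
  have hgij (i j) : Continuous fun t => g t i j := hg.matrix_elem i j
  have hentry (i j) : ∀ᶠ t in nhds 0, g t i j ^ 2 ≤ 1 := by
    by_cases hij : x = i ∧ y = j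
    · obtain ⟨rfl, rfl⟩ := hij
      refine (((hgij x y).pow 2).tendsto 0).eventually_le_const ?_
      simpa [hg0] using (hsq x y).lt_of_ne hne
    · exact .of_forall fun t => by simpa [g, hij] using hsq i j
  have hcols (j k) : ∀ᶠ t in nhds 0,
      innerMin (g t 0 j) (g t 1 j) ≤ innerMax (g t 0 k) (g t 1 k) := by
    obtain rfl | hjk := eq_or_ne j k
    · exact .of_forall fun t => innerMin_le_innerMax _ _
    · have hmin := continuous_innerMin.comp ((hgij 0 j).prodMk (hgij 1 j))
      have hmax := continuous_innerMax.comp ((hgij 0 k).prodMk (hgij 1 k))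
      refine ((hmin.tendsto 0).eventually_lt (hmax.tendsto 0) ?_).mono fun t => le_of_lt
      simpa [hg0] using hlt j k hjk
  have hmem : ∀ᶠ t in nhds 0, g t ∈ Cor 2 m := by
    filter_upwards [Filter.eventually_all.mpr fun i => Filter.eventually_all.mpr (hentry i),
      Filter.eventually_all.mpr fun j => Filter.eventually_all.mpr (hcols j)] with t h₁ h₂
    exact mem_Cor_two_iff.mpr ⟨h₁, h₂⟩
  simpa using congrFun₂ (eq_zero_of_eventually_add_smul_mem hC hmem) x y

lemma inner_eq_ite {E : Type*} [NormedAddCommGroup E] [InnerProductSpace ℝ E] {w : Fin 2 → E}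
    (hw : ∀ x, ‖w x‖ = 1) (x i : Fin 2) : ⟪w x, w i⟫ = if x = i then 1 else ⟪w 0, w 1⟫ := by
  fin_cases x <;> fin_cases i <;> simp [hw, real_inner_comm (w 0)]

lemma mul_ite_mem_Cor {t : ℝ} (ht : t ^ 2 ≤ 1) (σ : Fin m → Fin 2) {ε : Fin m → ℝ}
    (hε : ∀ y, ε y ^ 2 = 1) :
    (of fun x y => ε y * if x = σ y then 1 else t : Matrix (Fin 2) (Fin m) ℝ) ∈ Cor 2 m := by
  obtain ⟨a, b, ha, hb, rfl⟩ :=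
    exists_norm_eq_one_inner_eq (E := EuclideanSpace ℝ (Fin (2 + m))) (by simp) ht
  have hab : ∀ x, ‖![a, b] x‖ = 1 := Fin.forall_fin_two.mpr ⟨ha, hb⟩
  refine ⟨![a, b], fun y => ε y • ![a, b] (σ y), hab, fun y => ?_, fun x y => ?_⟩
  · rw [norm_smul, hab, mul_one, norm_eq_abs, ← pow_eq_one_iff_of_nonneg (abs_nonneg _) two_ne_zero,
      sq_abs, hε]
  · rw [real_inner_smul_right, inner_eq_ite hab]
    rfl

lemma inner_sq_eq_one_of_mem_extremePoints [NeZero m] {E : Type*} [NormedAddCommGroup E]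
    [InnerProductSpace ℝ E] {u : Fin 2 → E} {v : Fin m → E} (hC : C ∈ (Cor 2 m).extremePoints ℝ)
    (h : IsVectorRealization C u v) (hcol : ∀ y, ∃ x, C x y ^ 2 = 1) : ⟪u 0, u 1⟫ ^ 2 = 1 := by
  choose σ hσ using hcol
  -- Every `v y` is `± u (σ y)`, so `C` is an affine function of `⟪u 0, u 1⟫ ∈ [-1, 1]`.
  let M (t : ℝ) : Matrix (Fin 2) (Fin m) ℝ := of fun x y => C (σ y) y * if x = σ y then 1 else t
  have hM {t : ℝ} (ht : t ^ 2 ≤ 1) : M t ∈ Cor 2 m := mul_ite_mem_Cor ht σ hσ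
  set t := ⟪u 0, u 1⟫
  have hCM : C = M t := by
    ext x y
    rw [h.apply_eq_mul_inner (hσ y), inner_eq_ite h.norm_left]
    rfl
  by_contra hne
  have ht := abs_lt.mp <| (sq_lt_one_iff_abs_lt_one t).mp <|
    (inner_sq_le_one (h.norm_left 0) (h.norm_left 1)).lt_of_ne hne
  have hseg : C ∈ openSegment ℝ (M 1) (M (-1)) := by
    refine ⟨(1 + t) / 2, (1 - t) / 2, by linarith, by linarith, by ring, ?_⟩
    rw [hCM]
    ext x y
    simp only [M, Matrix.add_apply, Matrix.smul_apply, of_apply, smul_eq_mul]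
    split_ifs <;> ring
  have hM1 : M 1 = M t :=
    ((mem_extremePoints_iff_left.mp hC).2 _ (hM (by norm_num)) _ (hM (by norm_num)) hseg).trans hCM
  have hσ0 : C (σ 0) 0 ≠ 0 := fun h0 => by simpa [h0] using hσ 0
  have ht1 : t = 1 := by simpa [M, hσ0] using congrFun₂ hM1 (σ 0 + 1) 0
  exact ht.2.ne ht1

theorem mem_extremePoints_of_gramDet_eq_zero {s : ℝ} (hC : C ∈ Cor 2 m) (hs : s ^ 2 ≠ 1)
    (hzero : ∀ y, gramDet s (C 0 y) (C 1 y) = 0)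
    (huniq : ∀ t, (∀ y, 0 ≤ gramDet t (C 0 y) (C 1 y)) → t = s)
    (hcol : ∃ y, ∀ x, C x y ^ 2 ≠ 1) : C ∈ (Cor 2 m).extremePoints ℝ := by
  refine mem_extremePoints_iff_left.mpr ⟨hC, ?_⟩
  rintro C₁ hC₁ C₂ hC₂ ⟨l, r, hl, hr, hlr, rfl⟩
  obtain rfl : r = 1 - l := by linarith
  obtain ⟨u, v, h₁⟩ := mem_Cor_iff.mp hC₁
  obtain ⟨u', v', h₂⟩ := mem_Cor_iff.mp hC₂
  set C := l • C₁ + (1 - l) • C₂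
  have h := h₁.convexCombination h₂ hl.le (by linarith)
  have hplanar (y : Fin m) : (1 - s ^ 2) • v y =
      (C 0 y - s * C 1 y) • u 0 + (C 1 y - s * C 0 y) • u 1 := by
    have hsum := one_sub_sq_smul_eq_of_gramDet_eq_zero (h.norm_left 0) (h.norm_left 1)
      (h.norm_right y) (huniq _ h.gramDet_nonneg) (h.apply_eq 0 y).symm (h.apply_eq 1 y).symm
      (hzero y)
    simp only [← map_smul, ← map_add] at hsum
    exact fst_eq_of_weightedSum_eq hl hsum
  have hu : ⟪u 0, u 1⟫ = s := by
    obtain ⟨y, hy⟩ := hcol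
    exact inner_eq_of_one_sub_sq_smul_eq (h₁.norm_left 0) (h₁.norm_left 1) (h₁.norm_right y)
      (hplanar y) (hzero y) hs (hy 0) (hy 1)
  ext x y
  rw [h₁.apply_eq]
  fin_cases x
  · exact inner_left_eq_of_one_sub_sq_smul_eq (h₁.norm_left 0) hu (hplanar y) hs
  · exact inner_left_eq_of_one_sub_sq_smul_eq (h₁.norm_left 1) ((real_inner_comm _ _).trans hu)
      ((hplanar y).trans (add_comm _ _)) hs

end TwoRows

section RankTwo

lemma det_ne_zero_of_rank_eq_card {K n : Type*} [Field K] [Fintype n] [DecidableEq n]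
    {C : Matrix n n K} (h : C.rank = Fintype.card n) : C.det ≠ 0 := by
  have hli : LinearIndependent K C.col := linearIndependent_iff_card_eq_finrank_span.mpr <| by
    rw [Set.finrank, ← rank_eq_finrank_span_cols, h]
  exact ((isUnit_iff_isUnit_det C).mp (linearIndependent_cols_iff_isUnit.mp hli)).ne_zero

variable {C : Matrix (Fin 2) (Fin 2) ℝ}

lemma eq_of_sq_eq_one_of_mem_extremePoints (hC : C ∈ (Cor 2 2).extremePoints ℝ) (hdet : C.det ≠ 0)
    {p q : Fin 2 × Fin 2} (hp : C p.1 p.2 ^ 2 = 1) (hq : C q.1 q.2 ^ 2 = 1) : p = q := by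
  obtain ⟨u, v, h⟩ := mem_Cor_iff.mp hC.1
  obtain ⟨x, y⟩ := p
  obtain ⟨x', z⟩ := q
  obtain hyz | rfl := ne_or_eq y z
  · have hcol (k : Fin 2) : ∃ i, C i k ^ 2 = 1 := by
      obtain rfl | rfl : k = y ∨ k = z := by omega
      exacts [⟨x, hp⟩, ⟨x', hq⟩]
    exact absurd (h.det_eq_zero_of_inner_sq_eq_one zero_ne_one
      (inner_sq_eq_one_of_mem_extremePoints hC h hcol)) hdet
  · by_contra hne
    have hx : x ≠ x' := fun hx => hne (by rw [hx])
    exact hdet (h.det_eq_zero_of_inner_sq_eq_one hx (h.inner_sq_eq_one_of_column hp hq))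

lemma exists_innerMin_eq_innerMax_of_mem_extremePoints (hC : C ∈ (Cor 2 2).extremePoints ℝ)
    (hdet : C.det ≠ 0) :
    ∃ y z, y ≠ z ∧ innerMin (C 0 y) (C 1 y) = innerMax (C 0 z) (C 1 z) := by
  by_contra! hne
  have hone := sq_eq_one_of_mem_extremePoints_of_innerMin_lt hC fun y z hyz =>
    ((mem_Cor_two_iff.mp hC.1).2 y z).lt_of_ne (hne y z hyz)
  have hp : ((0, 0) : Fin 2 × Fin 2) = (1, 0) :=
    eq_of_sq_eq_one_of_mem_extremePoints hC hdet (hone 0 0) (hone 1 0)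
  simp at hp

lemma mem_extremePoints_of_innerMin_eq_innerMax (hC : C ∈ Cor 2 2) (hdet : C.det ≠ 0)
    {y z : Fin 2} (hyz : y ≠ z)
    (heq : innerMin (C 0 y) (C 1 y) = innerMax (C 0 z) (C 1 z))
    (hone : ∀ p q : Fin 2 × Fin 2, C p.1 p.2 ^ 2 = 1 → C q.1 q.2 ^ 2 = 1 → p = q) :
    C ∈ (Cor 2 2).extremePoints ℝ := by
  have hsq := sq_le_one_of_mem_Cor hC
  have huniq (t : ℝ) (ht : ∀ k, 0 ≤ gramDet t (C 0 k) (C 1 k)) :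
      t = innerMin (C 0 y) (C 1 y) := by
    have hy := (gramDet_nonneg_iff (hsq 0 y) (hsq 1 y)).mp (ht y)
    have hz := (gramDet_nonneg_iff (hsq 0 z) (hsq 1 z)).mp (ht z)
    exact le_antisymm (hz.2.trans_eq heq.symm) hy.1
  refine mem_extremePoints_of_gramDet_eq_zero hC (s := innerMin (C 0 y) (C 1 y)) (fun hs => ?_)
    (fun k => ?_) huniq ?_
  · obtain ⟨u, v, h⟩ := mem_Cor_iff.mp hC
    rw [← huniq _ h.gramDet_nonneg] at hs
    exact hdet (h.det_eq_zero_of_inner_sq_eq_one zero_ne_one hs)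
  · rw [gramDet_eq_sub_innerMin_mul _ (hsq 0 k) (hsq 1 k)]
    obtain rfl | rfl : k = y ∨ k = z := by omega
    · rw [sub_self, zero_mul]
    · rw [heq, sub_self, mul_zero]
  · by_contra! hcol
    obtain ⟨x, hx⟩ := hcol y
    obtain ⟨x', hx'⟩ := hcol z
    exact hyz (congrArg Prod.snd (hone (x, y) (x', z) hx hx'))

end RankTwo

section CycleInequalities

variable {ι : Type*}

/-- Saturation of a box inequality `0 ≤ φ p` (encoded by `true`) or `φ p ≤ π` (`false`). -/
def BoxTight (φ : ι → ℝ) (pb : ι × Bool) : Prop :=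
  if pb.2 then φ pb.1 = 0 else φ pb.1 = π

/-- Saturation of a cycle inequality `0 ≤ (∑ q ≠ p, φ q) - φ p` (encoded by `true`) or
`(∑ q ≠ p, φ q) - φ p ≤ 2 * π` (`false`). -/
def CycleTight [Fintype ι] (φ : ι → ℝ) (pb : ι × Bool) : Prop :=
  if pb.2 then (∑ q, φ q) - 2 * φ pb.1 = 0 else (∑ q, φ q) - 2 * φ pb.1 = 2 * π

lemma boxTight_true {φ : ι → ℝ} {p : ι} : BoxTight φ (p, true) ↔ φ p = 0 := by simp [BoxTight]

lemma boxTight_false {φ : ι → ℝ} {p : ι} : BoxTight φ (p, false) ↔ φ p = π := by simp [BoxTight]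

lemma cycleTight_true [Fintype ι] {φ : ι → ℝ} {p : ι} :
    CycleTight φ (p, true) ↔ (∑ q, φ q) - 2 * φ p = 0 := by simp [CycleTight]

lemma cycleTight_false [Fintype ι] {φ : ι → ℝ} {p : ι} :
    CycleTight φ (p, false) ↔ (∑ q, φ q) - 2 * φ p = 2 * π := by simp [CycleTight]

lemma exists_boxTight_arccos_iff {c : ι → ℝ} {p : ι} (hp : c p ^ 2 ≤ 1) :
    (∃ b, BoxTight (fun q => arccos (c q)) (p, b)) ↔ c p ^ 2 = 1 := by
  have habs := abs_le.mp ((sq_le_one_iff_abs_le_one _).mp hp)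
  rw [Bool.exists_bool, boxTight_false, boxTight_true, arccos_eq_pi, arccos_eq_zero,
    habs.2.ge_iff_eq, habs.1.ge_iff_eq', sq_eq_one_iff, or_comm]

lemma boxTight_subsingleton_iff {φ : ι → ℝ} :
    (∀ p q, BoxTight φ p → BoxTight φ q → p = q) ↔
      ∀ p q, (∃ b, BoxTight φ (p, b)) → (∃ b, BoxTight φ (q, b)) → p = q := by
  refine ⟨fun h p q ⟨b, hp⟩ ⟨b', hq⟩ => congrArg Prod.fst (h _ _ hp hq), ?_⟩
  rintro h ⟨p, b⟩ ⟨q, b'⟩ hp hq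
  obtain rfl := h p q ⟨b, hp⟩ ⟨b', hq⟩
  cases b <;> cases b' <;> simp_all [boxTight_true, boxTight_false, pi_ne_zero, pi_ne_zero.symm]

lemma exists_ne_sum_eq_of_card_eq_four [Fintype ι] (hι : Fintype.card ι = 4) {p q : ι}
    (hpq : p ≠ q) : ∃ r r', r ≠ r' ∧ ∀ f : ι → ℝ, ∑ i, f i = f p + f q + (f r + f r') := by
  classical
  obtain ⟨r, r', hr, hcompl⟩ := Finset.card_eq_two.mp
    (show ({p, q}ᶜ : Finset ι).card = 2 by rw [Finset.card_compl, Finset.card_pair hpq, hι])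
  refine ⟨r, r', hr, fun f => ?_⟩
  rw [← Finset.sum_add_sum_compl {p, q} f, hcompl, Finset.sum_pair hpq, Finset.sum_pair hr]

theorem CycleTight.eq_of_boxTight_unique [Fintype ι] (hι : Fintype.card ι = 4) {φ : ι → ℝ}
    (hφ : ∀ i, φ i ∈ Set.Icc 0 π) (hbox : ∀ p q, BoxTight φ p → BoxTight φ q → p = q)
    {pb qb : ι × Bool} (hp : CycleTight φ pb) (hq : CycleTight φ qb) : pb = qb := by
  obtain ⟨p, b⟩ := pb
  obtain ⟨q, b'⟩ := qb
  wlog hle : b' ≤ b generalizing p q b b'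
  · exact (this q b' hq p b hp (le_of_not_ge hle)).symm
  obtain rfl | hpq := eq_or_ne p q
  · cases b <;> cases b' <;> simp_all [cycleTight_true, cycleTight_false, pi_ne_zero]
  obtain ⟨r, r', hr, hsum⟩ := exists_ne_sum_eq_of_card_eq_four hι hpq
  have hbounds (i : ι) : 0 ≤ φ i ∧ φ i ≤ π := hφ i
  have := hbounds p
  have := hbounds q
  have := hbounds r
  have := hbounds r'
  cases b <;> cases b' <;> simp only [cycleTight_true, cycleTight_false, hsum] at hp hq
  · have hrπ : φ r = π ∧ φ r' = π := by constructor <;> linarith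
    have := hbox (r, false) (r', false) (boxTight_false.mpr hrπ.1) (boxTight_false.mpr hrπ.2)
    simp_all
  · exact absurd hle (by decide)
  · have hpq' : φ p = π ∧ φ q = 0 := by constructor <;> linarith
    have := hbox (p, false) (q, true) (boxTight_false.mpr hpq'.1) (boxTight_true.mpr hpq'.2)
    simp_all
  · have hr0 : φ r = 0 ∧ φ r' = 0 := by constructor <;> linarith
    have := hbox (r, true) (r', true) (boxTight_true.mpr hr0.1) (boxTight_true.mpr hr0.2)
    simp_all

lemma cos_eq_cos_iff_of_mem_Icc {p q : ℝ} (hp : p ∈ Set.Icc 0 (2 * π)) (hq : q ∈ Set.Icc (-π) π) :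
    cos p = cos q ↔ p = q ∨ p = -q ∨ p = 2 * π + q ∨ p = 2 * π - q := by
  obtain ⟨hp0, hp2⟩ := hp
  obtain ⟨hqn, hqπ⟩ := hq
  refine ⟨fun h => ?_, ?_⟩
  · obtain ⟨k, hk⟩ := cos_eq_cos_iff.mp h.symm
    have hk0 : (-1 : ℝ) < k := by
      by_contra! hcon
      obtain hk | hk := hk <;> nlinarith [pi_pos]
    have hk2 : (k : ℝ) < 2 := by
      by_contra! hcon
      obtain hk | hk := hk <;> nlinarith [pi_pos]
    obtain rfl | rfl : k = 0 ∨ k = 1 := by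
      have : -1 < k := by exact_mod_cast hk0
      have : k < 2 := by exact_mod_cast hk2
      omega
    · simp only [Int.cast_zero, mul_zero, zero_mul, zero_add, zero_sub] at hk
      tauto
    · simp only [Int.cast_one, mul_one] at hk
      tauto
  · rintro (rfl | rfl | rfl | rfl)
    · rfl
    · exact cos_neg q
    · rw [add_comm, cos_add_two_pi]
    · exact cos_two_pi_sub q

theorem cos_add_eq_cos_sub_iff_exists_cycleTight {φ : Fin 2 × Fin 2 → ℝ}
    (hφ : ∀ i, φ i ∈ Set.Icc 0 π) {y z : Fin 2} (hyz : y ≠ z) :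
    cos (φ (0, y) + φ (1, y)) = cos (φ (0, z) - φ (1, z)) ↔
      ∃ x b, CycleTight φ ((x, z), b) := by
  have hsum : ∑ q, φ q = (φ (0, y) + φ (1, y)) + (φ (0, z) + φ (1, z)) := by
    rw [Fintype.sum_prod_type_right, Fin.sum_univ_two, Fin.sum_univ_two, Fin.sum_univ_two]
    obtain ⟨rfl, rfl⟩ | ⟨rfl, rfl⟩ : y = 0 ∧ z = 1 ∨ y = 1 ∧ z = 0 := by omega
    exacts [rfl, add_comm _ _]
  have hadd : φ (0, y) + φ (1, y) ∈ Set.Icc 0 (2 * π) := by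
    constructor <;> linarith [(hφ (0, y)).1, (hφ (1, y)).1, (hφ (0, y)).2, (hφ (1, y)).2]
  have hsub : φ (0, z) - φ (1, z) ∈ Set.Icc (-π) π := by
    constructor <;> linarith [(hφ (0, z)).1, (hφ (1, z)).1, (hφ (0, z)).2, (hφ (1, z)).2]
  rw [cos_eq_cos_iff_of_mem_Icc hadd hsub]
  simp only [Fin.exists_fin_two, Bool.exists_bool, cycleTight_true, cycleTight_false, hsum]
  grind

lemma exists_innerMin_eq_innerMax_iff_exists_cycleTight (C : Matrix (Fin 2) (Fin 2) ℝ) :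
    (∃ y z, y ≠ z ∧ innerMin (C 0 y) (C 1 y) = innerMax (C 0 z) (C 1 z)) ↔
      ∃ pb, CycleTight (fun q : Fin 2 × Fin 2 => arccos (C q.1 q.2)) pb := by
  have hiff {y z : Fin 2} (hyz : y ≠ z) := cos_add_eq_cos_sub_iff_exists_cycleTight
    (φ := fun q => arccos (C q.1 q.2)) (fun _ => ⟨arccos_nonneg _, arccos_le_pi _⟩) hyz
  constructor
  · rintro ⟨y, z, hyz, heq⟩
    obtain ⟨x, b, h⟩ := (hiff hyz).mp heq
    exact ⟨_, h⟩
  · rintro ⟨⟨⟨x, z⟩, b⟩, h⟩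
    have hz : z + 1 ≠ z := by simp
    exact ⟨z + 1, z, hz, (hiff hz).mpr ⟨x, b, h⟩⟩

end CycleInequalities

theorem stmt5 (C : Matrix (Fin 2) (Fin 2) ℝ) (hC : C ∈ Cor 2 2) (hrank : C.rank = 2)
    (θ : Fin 2 → Fin 2 → ℝ) (hθ : ∀ x y, θ x y = Real.arccos (C x y)) :
    IsExtremePt (Cor 2 2) C ↔
      ((∃! pb : (Fin 2 × Fin 2) × Bool,
          if pb.2 then
            (∑ q : Fin 2 × Fin 2, θ q.1 q.2) - 2 * θ pb.1.1 pb.1.2 = 0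
          else
            (∑ q : Fin 2 × Fin 2, θ q.1 q.2) - 2 * θ pb.1.1 pb.1.2 = 2 * π) ∧
       (∀ p q : (Fin 2 × Fin 2) × Bool,
          (if p.2 then θ p.1.1 p.1.2 = 0 else θ p.1.1 p.1.2 = π) →
          (if q.2 then θ q.1.1 q.1.2 = 0 else θ q.1.1 q.1.2 = π) →
          p = q)) := by
  obtain rfl : θ = fun x y => arccos (C x y) := funext₂ hθ
  let φ (q : Fin 2 × Fin 2) : ℝ := arccos (C q.1 q.2)
  change _ ↔ (∃! pb, CycleTight φ pb) ∧ ∀ p q, BoxTight φ p → BoxTight φ q → p = q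
  have hdet : C.det ≠ 0 := det_ne_zero_of_rank_eq_card hrank
  have hbox : (∀ p q, BoxTight φ p → BoxTight φ q → p = q) ↔
      ∀ p q : Fin 2 × Fin 2, C p.1 p.2 ^ 2 = 1 → C q.1 q.2 ^ 2 = 1 → p = q := by
    have hsq (p : Fin 2 × Fin 2) := exists_boxTight_arccos_iff (c := fun q => C q.1 q.2) (p := p)
      (sq_le_one_of_mem_Cor hC p.1 p.2)
    simp only [boxTight_subsingleton_iff, hsq, φ]
  have htight := exists_innerMin_eq_innerMax_iff_exists_cycleTight C
  rw [isExtremePt_iff_mem_extremePoints]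
  refine ⟨fun h => ?_, fun ⟨hcycle, hone⟩ => ?_⟩
  · have hone := hbox.mpr fun p q => eq_of_sq_eq_one_of_mem_extremePoints h hdet
    obtain ⟨pb, hpb⟩ := htight.mp (exists_innerMin_eq_innerMax_of_mem_extremePoints h hdet)
    exact ⟨⟨pb, hpb, fun qb hqb => hqb.eq_of_boxTight_unique (by simp)
      (fun _ => ⟨arccos_nonneg _, arccos_le_pi _⟩) hone hpb⟩, hone⟩
  · obtain ⟨y, z, hyz, heq⟩ := htight.mpr hcycle.exists
    exact mem_extremePoints_of_innerMin_eq_innerMax hC hdet hyz heq (hbox.mp hone)
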